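/- Let f : ℝ → ℝ satisfy the harmonic extension recurrence on dyadic points: for every integer m ≥ 1 and every even integer j with 0 ≤ j ≤ 2^m − 2, f((2j+1)/2^{m+1}) = (8/25)·f(j/2^m) + (4/5)·f((j+1)/2^m) − (3/25)·f((j+2)/2^m) and f((2j+3)/2^{m+1}) = (8/25)·f((j+2)/2^m) + (4/5)·f((j+1)/2^m) − (3/25)·f(j/2^m), and suppose f(1) ≠ f(0). For each m define the step function g_m : [0,1) → ℝ by g_m(t) = 2^m·(f((j+1)/2^m) − f(j/2^m)) for t ∈ [j/2^m, (j+1)/2^m), 0 ≤ j ≤ 2^m − 1. Then the sequence (g_m) is not a Cauchy sequence in L¹([0,1], Lebesgue measure); in particular there is no integrable function g on [0,1] with ∫_0^1 |g_m(t) − g(t)| dt → 0 as m → ∞. -/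

import Mathlib

open MeasureTheory Filter

/-!
Read `g m` as a distribution of the increments of `f`. On a dyadic interval of level `m`, the
function `g (m + 1)` is constant on each half, so it puts exactly half of the increment of `f` on
the middle half of the interval. The recurrence makes `g (m + 2)` put the share `11 / 25` there
instead. Hence on that interval the two functions are at `L¹` distance at least
`|1 - 2 * (11 / 25)| = 3 / 25` times the absolute value of the increment. Summing over the intervals
keeps consecutive approximations `(3 / 25) * |f 1 - f 0|` apart at every scale.
-/

/-- The `k`-th half-open dyadic interval of length `2⁻ᵐ`, counted from `0` at the origin. -/
def dyadicCell (m k : ℕ) : Set ℝ :=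
  Set.Ico ((k : ℝ) / 2 ^ m) (((k : ℝ) + 1) / 2 ^ m)

/-- `φ` is a dyadic step function of level `m` on `[0, 1)`, taking the value `c k` on the `k`-th
cell. Values of `φ` outside `[0, 1)` and of `c` beyond `2 ^ m` are irrelevant. -/
def IsDyadicStep {α : Type*} (m : ℕ) (c : ℕ → α) (φ : ℝ → α) : Prop :=
  ∀ k < 2 ^ m, ∀ t ∈ dyadicCell m k, φ t = c k

/-- The increment of `f` over the `k`-th dyadic interval of level `m`: the mass of that interval
under the increment measure of `f`. -/
noncomputable def dyadicIncrement {E : Type*} [Sub E] (f : ℝ → E) (m k : ℕ) : E :=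
  f (((k : ℝ) + 1) / 2 ^ m) - f ((k : ℝ) / 2 ^ m)

/-- On every dyadic interval of level `m`, the middle half carries the share `r` of the increment
of `f`. The middle half is given as the union of the two inner quarters. -/
def HasMiddleShare {E : Type*} [AddCommGroup E] [Module ℝ E] (f : ℝ → E) (r : ℝ) (m : ℕ) : Prop :=
  ∀ i < 2 ^ m,
    dyadicIncrement f (m + 2) (4 * i + 1) + dyadicIncrement f (m + 2) (4 * i + 2) =
      r • dyadicIncrement f m i

/-- The harmonic extension recurrence on dyadic points, satisfied by the restriction of a harmonic
function on the Sierpinski gasket to a segment. -/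
def HarmonicRecurrence (f : ℝ → ℝ) : Prop :=
  ∀ m : ℕ, 1 ≤ m → ∀ j : ℕ, Even j → j ≤ 2 ^ m - 2 →
    f ((2 * (j : ℝ) + 1) / 2 ^ (m + 1)) =
        (8 / 25) * f ((j : ℝ) / 2 ^ m) + (4 / 5) * f (((j : ℝ) + 1) / 2 ^ m)
          - (3 / 25) * f (((j : ℝ) + 2) / 2 ^ m) ∧
      f ((2 * (j : ℝ) + 3) / 2 ^ (m + 1)) =
        (8 / 25) * f (((j : ℝ) + 2) / 2 ^ m) + (4 / 5) * f (((j : ℝ) + 1) / 2 ^ m)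
          - (3 / 25) * f ((j : ℝ) / 2 ^ m)

lemma sum_range_two_mul {M : Type*} [AddCommMonoid M] (a : ℕ → M) (n : ℕ) :
    ∑ k ∈ Finset.range (2 * n), a k = ∑ j ∈ Finset.range n, (a (2 * j) + a (2 * j + 1)) := by
  induction n with
  | zero => rfl
  | succ n ih =>
    rw [mul_add_one, Finset.sum_range_succ, Finset.sum_range_succ, ih, Finset.sum_range_succ,
      add_assoc]

lemma dyadicCell_succ_subset (m k : ℕ) : dyadicCell (m + 1) k ⊆ dyadicCell m (k / 2) := by
  have hlower : ((k / 2 : ℕ) : ℝ) ≤ k / 2 := Nat.cast_div_le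
  have hupper : ((k : ℝ) + 1) / 2 ≤ ((k / 2 : ℕ) : ℝ) + 1 := by
    rw [div_le_iff₀ two_pos]
    exact_mod_cast (by lia : k + 1 ≤ (k / 2 + 1) * 2)
  simp only [dyadicCell, pow_succ' (2 : ℝ) m, ← div_div]
  exact Set.Ico_subset_Ico (by gcongr) (by gcongr)

namespace IsDyadicStep

section Operations

variable {α β γ : Type*} {m : ℕ} {c : ℕ → α} {d : ℕ → β} {φ : ℝ → α} {ψ : ℝ → β}

lemma map₂ (F : α → β → γ) (hφ : IsDyadicStep m c φ) (hψ : IsDyadicStep m d ψ) :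
    IsDyadicStep m (fun k => F (c k) (d k)) (fun t => F (φ t) (ψ t)) :=
  fun k hk t ht => congrArg₂ F (hφ k hk t ht) (hψ k hk t ht)

lemma succ (hφ : IsDyadicStep m c φ) : IsDyadicStep (m + 1) (fun k => c (k / 2)) φ :=
  fun k hk t ht => hφ (k / 2) (by lia) t (dyadicCell_succ_subset m k ht)

lemma eqOn_uIoo (hφ : IsDyadicStep m c φ) {k : ℕ} (hk : k < 2 ^ m) :
    Set.EqOn (fun _ => c k) φ (Set.uIoo ((k : ℝ) / 2 ^ m) (((k + 1 : ℕ) : ℝ) / 2 ^ m)) := by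
  rw [Set.uIoo_of_le (by gcongr; lia), Nat.cast_add_one]
  exact fun t ht => (hφ k hk t (Set.Ioo_subset_Ico_self ht)).symm

end Operations

section Integral

variable {E : Type*} [NormedAddCommGroup E] {m : ℕ} {c : ℕ → E} {φ : ℝ → E}

lemma intervalIntegrable_cell (hφ : IsDyadicStep m c φ) {k : ℕ} (hk : k < 2 ^ m) :
    IntervalIntegrable φ volume ((k : ℝ) / 2 ^ m) (((k + 1 : ℕ) : ℝ) / 2 ^ m) :=
  intervalIntegrable_const.congr_uIoo (hφ.eqOn_uIoo hk)

lemma integral_cell [NormedSpace ℝ E] [CompleteSpace E] (hφ : IsDyadicStep m c φ) {k : ℕ}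
    (hk : k < 2 ^ m) :
    ∫ t in ((k : ℝ) / 2 ^ m)..(((k + 1 : ℕ) : ℝ) / 2 ^ m), φ t = ((2 : ℝ) ^ m)⁻¹ • c k := by
  rw [← intervalIntegral.integral_congr_uIoo (hφ.eqOn_uIoo hk), intervalIntegral.integral_const,
    ← sub_div, Nat.cast_add_one, add_sub_cancel_left, one_div]

lemma integrableOn_Icc (hφ : IsDyadicStep m c φ) : IntegrableOn φ (Set.Icc 0 1) := by
  have hcells := IntervalIntegrable.trans_iterate (a := fun k : ℕ => (k : ℝ) / 2 ^ m)
    fun k hk => hφ.intervalIntegrable_cell (k := k) hk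
  simpa [intervalIntegrable_iff_integrableOn_Icc_of_le] using hcells

lemma integral_Icc [NormedSpace ℝ E] [CompleteSpace E] (hφ : IsDyadicStep m c φ) :
    ∫ t in Set.Icc 0 1, φ t = ((2 : ℝ) ^ m)⁻¹ • ∑ k ∈ Finset.range (2 ^ m), c k := by
  have hcells := intervalIntegral.sum_integral_adjacent_intervals
    (a := fun k : ℕ => (k : ℝ) / 2 ^ m) fun k hk => hφ.intervalIntegrable_cell (k := k) hk
  rw [integral_Icc_eq_integral_Ioc, ← intervalIntegral.integral_of_le zero_le_one,
    Finset.smul_sum]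
  simp only [Nat.cast_zero, zero_div, Nat.cast_pow, Nat.cast_ofNat,
    div_self (pow_ne_zero m (two_ne_zero (α := ℝ)))] at hcells
  rw [← hcells]
  exact Finset.sum_congr rfl fun k hk => hφ.integral_cell (Finset.mem_range.1 hk)

end Integral

end IsDyadicStep

section Increments

variable {E : Type*} [AddCommGroup E]

lemma dyadicIncrement_two_mul_add (f : ℝ → E) (m k : ℕ) :
    dyadicIncrement f (m + 1) (2 * k) + dyadicIncrement f (m + 1) (2 * k + 1) =
      dyadicIncrement f m k := by
  have hleft : 2 * (k : ℝ) / 2 ^ (m + 1) = k / 2 ^ m := by field_simp; ring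
  have hright : (2 * (k : ℝ) + 1 + 1) / 2 ^ (m + 1) = (k + 1) / 2 ^ m := by field_simp; ring
  simp only [dyadicIncrement, Nat.cast_add, Nat.cast_mul, Nat.cast_ofNat, Nat.cast_one, hleft,
    hright]
  abel

lemma sum_dyadicIncrement (f : ℝ → E) (m : ℕ) :
    ∑ k ∈ Finset.range (2 ^ m), dyadicIncrement f m k = f 1 - f 0 := by
  simpa [dyadicIncrement] using Finset.sum_range_sub (fun k : ℕ => f ((k : ℝ) / 2 ^ m)) (2 ^ m)

end Increments

lemma HarmonicRecurrence.hasMiddleShare {f : ℝ → ℝ} (hf : HarmonicRecurrence f) (m : ℕ) :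
    HasMiddleShare f (11 / 25) m := by
  intro i hi
  obtain ⟨hfirst, hthird⟩ := hf (m + 1) (by lia) (2 * i) (even_two_mul i) (by lia)
  have hleft : 2 * (i : ℝ) / 2 ^ (m + 1) = i / 2 ^ m := by field_simp; ring
  have hright : (2 * (i : ℝ) + 2) / 2 ^ (m + 1) = (i + 1) / 2 ^ m := by field_simp; ring
  push_cast [hleft, hright] at hfirst hthird
  have hquarters : dyadicIncrement f (m + 2) (4 * i + 1) + dyadicIncrement f (m + 2) (4 * i + 2) =
      f ((2 * (2 * (i : ℝ)) + 3) / 2 ^ (m + 1 + 1)) -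
        f ((2 * (2 * (i : ℝ)) + 1) / 2 ^ (m + 1 + 1)) := by
    simp only [dyadicIncrement]
    push_cast
    ring_nf
  rw [hquarters, hfirst, hthird, dyadicIncrement, smul_eq_mul]
  ring

section Gap

variable {E : Type*} [NormedAddCommGroup E] [NormedSpace ℝ E] {f : ℝ → E} {r : ℝ} {m : ℕ}
  {φ ψ : ℝ → E}

lemma integral_norm_sub_eq_sum_norm_dyadicIncrement
    (hφ : IsDyadicStep m (fun k => (2 : ℝ) ^ m • dyadicIncrement f m k) φ)
    (hψ : IsDyadicStep (m + 1) (fun k => (2 : ℝ) ^ (m + 1) • dyadicIncrement f (m + 1) k) ψ) :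
    ∫ t in Set.Icc 0 1, ‖φ t - ψ t‖ =
      ∑ j ∈ Finset.range (2 ^ m),
        ‖dyadicIncrement f (m + 1) (2 * j + 1) - dyadicIncrement f (m + 1) (2 * j)‖ := by
  have hstep := hφ.succ.map₂ (fun x y => ‖x - y‖) hψ
  rw [hstep.integral_Icc, pow_succ' (2 : ℕ) m, pow_succ' (2 : ℝ) m, sum_range_two_mul, smul_eq_mul,
    Finset.mul_sum]
  refine Finset.sum_congr rfl fun j _ => ?_
  rw [show 2 * j / 2 = j by lia, show (2 * j + 1) / 2 = j by lia,
    ← dyadicIncrement_two_mul_add f m j]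
  generalize dyadicIncrement f (m + 1) (2 * j) = x
  generalize dyadicIncrement f (m + 1) (2 * j + 1) = y
  have hx : (2 : ℝ) ^ m • (x + y) - (2 * 2 ^ m : ℝ) • x = (2 : ℝ) ^ m • (y - x) := by module
  have hy : (2 : ℝ) ^ m • (x + y) - (2 * 2 ^ m : ℝ) • y = -((2 : ℝ) ^ m • (y - x)) := by module
  rw [hx, hy, norm_neg, norm_smul, norm_pow, Real.norm_ofNat]
  field_simp
  ring

lemma HasMiddleShare.mul_norm_dyadicIncrement_le (hf : HasMiddleShare f r m) {i : ℕ}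
    (hi : i < 2 ^ m) :
    |1 - 2 * r| * ‖dyadicIncrement f m i‖ ≤
      ‖dyadicIncrement f (m + 2) (4 * i + 1) - dyadicIncrement f (m + 2) (4 * i)‖ +
        ‖dyadicIncrement f (m + 2) (4 * i + 3) - dyadicIncrement f (m + 2) (4 * i + 2)‖ := by
  have hmiddle := hf i hi
  have htotal : dyadicIncrement f (m + 2) (4 * i) + dyadicIncrement f (m + 2) (4 * i + 1) +
      (dyadicIncrement f (m + 2) (4 * i + 2) + dyadicIncrement f (m + 2) (4 * i + 3)) =
        dyadicIncrement f m i := by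
    rw [← dyadicIncrement_two_mul_add f m i, ← dyadicIncrement_two_mul_add f (m + 1) (2 * i),
      ← dyadicIncrement_two_mul_add f (m + 1) (2 * i + 1)]
    ring_nf
  generalize dyadicIncrement f (m + 2) (4 * i) = a at *
  generalize dyadicIncrement f (m + 2) (4 * i + 1) = b at *
  generalize dyadicIncrement f (m + 2) (4 * i + 2) = c at *
  generalize dyadicIncrement f (m + 2) (4 * i + 3) = d at *
  have houter_sub_inner : (1 - 2 * r) • dyadicIncrement f m i = (d - c) - (b - a) := by
    rw [sub_smul, one_smul, mul_smul, ← hmiddle, ← htotal]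
    module
  calc |1 - 2 * r| * ‖dyadicIncrement f m i‖
      = ‖(d - c) - (b - a)‖ := by rw [← houter_sub_inner, norm_smul, Real.norm_eq_abs]
    _ ≤ ‖d - c‖ + ‖b - a‖ := norm_sub_le _ _
    _ = ‖b - a‖ + ‖d - c‖ := add_comm _ _

lemma HasMiddleShare.mul_norm_le_integral_norm_sub (hf : HasMiddleShare f r m)
    (hφ : IsDyadicStep (m + 1) (fun k => (2 : ℝ) ^ (m + 1) • dyadicIncrement f (m + 1) k) φ)
    (hψ : IsDyadicStep (m + 2) (fun k => (2 : ℝ) ^ (m + 2) • dyadicIncrement f (m + 2) k) ψ) :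
    |1 - 2 * r| * ‖f 1 - f 0‖ ≤ ∫ t in Set.Icc 0 1, ‖φ t - ψ t‖ := by
  calc |1 - 2 * r| * ‖f 1 - f 0‖
      ≤ |1 - 2 * r| * ∑ i ∈ Finset.range (2 ^ m), ‖dyadicIncrement f m i‖ := by
        rw [← sum_dyadicIncrement f m]
        gcongr
        exact norm_sum_le _ _
    _ ≤ ∑ i ∈ Finset.range (2 ^ m),
          (‖dyadicIncrement f (m + 2) (4 * i + 1) - dyadicIncrement f (m + 2) (4 * i)‖ +
            ‖dyadicIncrement f (m + 2) (4 * i + 3) - dyadicIncrement f (m + 2) (4 * i + 2)‖) := by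
        rw [Finset.mul_sum]
        exact Finset.sum_le_sum fun i hi => hf.mul_norm_dyadicIncrement_le (Finset.mem_range.1 hi)
    _ = ∫ t in Set.Icc 0 1, ‖φ t - ψ t‖ := by
        rw [integral_norm_sub_eq_sum_norm_dyadicIncrement hφ hψ, pow_succ' 2 m, sum_range_two_mul]
        refine Finset.sum_congr rfl fun i _ => ?_
        ring_nf

end Gap

section Cauchy

variable {X E : Type*} [MeasurableSpace X] {μ : Measure X} [NormedAddCommGroup E]

lemma integral_norm_sub_le_add {u v w : X → E} (hu : Integrable u μ) (hv : Integrable v μ)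
    (hw : Integrable w μ) :
    ∫ x, ‖u x - v x‖ ∂μ ≤ ∫ x, ‖u x - w x‖ ∂μ + ∫ x, ‖v x - w x‖ ∂μ := by
  have huw : Integrable (fun x => ‖u x - w x‖) μ := (hu.sub hw).norm
  have hvw : Integrable (fun x => ‖v x - w x‖) μ := (hv.sub hw).norm
  rw [← integral_add huw hvw]
  refine integral_mono (hu.sub hv).norm (huw.add hvw) fun x => ?_
  simpa only [dist_eq_norm] using dist_triangle_right (u x) (v x) (w x)

lemma exists_forall_ge_integral_norm_sub_lt_of_tendsto {g : ℕ → X → E} {h : X → E}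
    (hg : ∀ n, Integrable (g n) μ) (hh : Integrable h μ)
    (hlim : Tendsto (fun n => ∫ x, ‖g n x - h x‖ ∂μ) atTop (nhds 0)) {ε : ℝ} (hε : 0 < ε) :
    ∃ N, ∀ m ≥ N, ∀ n ≥ N, ∫ x, ‖g m x - g n x‖ ∂μ < ε := by
  obtain ⟨N, hN⟩ := eventually_atTop.1 (hlim.eventually_lt_const (half_pos hε))
  refine ⟨N, fun m hm n hn => (integral_norm_sub_le_add (hg m) (hg n) hh).trans_lt ?_⟩
  linarith [hN m hm, hN n hn]

end Cauchy

theorem increment_measure_not_absolutely_continuous_general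
    {E : Type*} [NormedAddCommGroup E] [NormedSpace ℝ E] {f : ℝ → E} {r : ℝ} (hr : r ≠ 1 / 2)
    (hf : ∃ᶠ m in atTop, HasMiddleShare f r m) (hne : f 1 ≠ f 0) {g : ℕ → ℝ → E}
    (hg : ∀ m, IsDyadicStep m (fun k => (2 : ℝ) ^ m • dyadicIncrement f m k) (g m)) :
    (¬ ∀ ε : ℝ, 0 < ε → ∃ N : ℕ, ∀ m ≥ N, ∀ n ≥ N,
        (∫ t in Set.Icc (0 : ℝ) 1, ‖g m t - g n t‖) < ε) ∧
    ¬ ∃ h : ℝ → E, IntegrableOn h (Set.Icc (0 : ℝ) 1) ∧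
        Tendsto (fun m : ℕ => ∫ t in Set.Icc (0 : ℝ) 1, ‖g m t - h t‖) atTop (nhds 0) := by
  have hshare : 1 - 2 * r ≠ 0 := fun h => hr (by linarith)
  have hgap : 0 < |1 - 2 * r| * ‖f 1 - f 0‖ :=
    mul_pos (abs_pos.2 hshare) (norm_pos_iff.2 (sub_ne_zero.2 hne))
  have hnot_cauchy : ¬ ∀ ε : ℝ, 0 < ε → ∃ N : ℕ, ∀ m ≥ N, ∀ n ≥ N,
      (∫ t in Set.Icc (0 : ℝ) 1, ‖g m t - g n t‖) < ε := by
    intro hcauchy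
    obtain ⟨N, hN⟩ := hcauchy _ hgap
    obtain ⟨m, hm, hfm⟩ := frequently_atTop.1 hf N
    exact (hfm.mul_norm_le_integral_norm_sub (hg (m + 1)) (hg (m + 2))).not_gt
      (hN (m + 1) (by lia) (m + 2) (by lia))
  refine ⟨hnot_cauchy, fun ⟨h, hh, hlim⟩ => hnot_cauchy fun ε hε => ?_⟩
  exact exists_forall_ge_integral_norm_sub_lt_of_tendsto (fun n => (hg n).integrableOn_Icc) hh
    hlim hε

/-- For a function `f` satisfying the harmonic extension recurrence
on dyadic points with `f 1 ≠ f 0`, the dyadic step-function approximations `g m` to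
the increment measure of `f` do not form a Cauchy sequence in `L¹([0,1])`; in
particular they converge to no integrable function in `L¹([0,1])`. -/
theorem increment_measure_not_absolutely_continuous
    (f : ℝ → ℝ)
    (hrec : ∀ m : ℕ, 1 ≤ m → ∀ j : ℕ, Even j → j ≤ 2 ^ m - 2 →
      f ((2 * (j : ℝ) + 1) / 2 ^ (m + 1)) =
          (8 / 25) * f ((j : ℝ) / 2 ^ m) + (4 / 5) * f (((j : ℝ) + 1) / 2 ^ m)
            - (3 / 25) * f (((j : ℝ) + 2) / 2 ^ m) ∧
        f ((2 * (j : ℝ) + 3) / 2 ^ (m + 1)) =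
          (8 / 25) * f (((j : ℝ) + 2) / 2 ^ m) + (4 / 5) * f (((j : ℝ) + 1) / 2 ^ m)
            - (3 / 25) * f ((j : ℝ) / 2 ^ m))
    (hne : f 1 ≠ f 0)
    (g : ℕ → ℝ → ℝ)
    (hg : ∀ m : ℕ, ∀ j : ℕ, j < 2 ^ m →
      ∀ t ∈ Set.Ico ((j : ℝ) / 2 ^ m) (((j : ℝ) + 1) / 2 ^ m),
        g m t = 2 ^ m * (f (((j : ℝ) + 1) / 2 ^ m) - f ((j : ℝ) / 2 ^ m))) :
    (¬ ∀ ε : ℝ, 0 < ε → ∃ N : ℕ, ∀ m ≥ N, ∀ n ≥ N,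
        (∫ t in Set.Icc (0 : ℝ) 1, |g m t - g n t|) < ε) ∧
    ¬ ∃ h : ℝ → ℝ, IntegrableOn h (Set.Icc (0 : ℝ) 1) ∧
        Tendsto (fun m : ℕ => ∫ t in Set.Icc (0 : ℝ) 1, |g m t - h t|) atTop (nhds 0) :=
  increment_measure_not_absolutely_continuous_general (r := 11 / 25) (by norm_num)
    (Frequently.of_forall (HarmonicRecurrence.hasMiddleShare hrec)) hne hg
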